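/- arXiv:1810.06162 — 4 statements merged into one kernel-verified Lean document; each statement's English description precedes it below -/
import Mathlib

section
/- Let H be a reflexive digraph. For distinct vertices u,v of H and their pair vertices in the pair digraph H⁺ and the implication graph H*, (u',v') is reachable from (u,v) by a directed walk in H⁺ if and only if (u',v') is reachable from (u,v) by a directed walk in H*. -/
/-- A digraph on vertex type `V` is given by its edge relation `E : V → V → Prop`
(loops allowed).  The min-ordering property for a strict linear order `r`:
for any edges `(u,v)` and `(u',v')` with `r u u'` and `r v' v`, `(u,v')` is also an edge. -/
def MinOrderProp {V : Type*} (E r : V → V → Prop) : Prop :=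
  ∀ u v u' v' : V, E u v → E u' v' → r u u' → r v' v → E u v'

/-- The edge relation of the pair digraph `H⁺` of a digraph with edge relation `E`:
for all vertices `u, u', v, v'`, there are edges `(u,u') → (v,v')` and `(v',v) → (u',u)`
whenever `E u v`, `E u' v'`, `¬ E u v'`, and the endpoints have distinct coordinates. -/
def pairEdge {V : Type*} (E : V → V → Prop) (p q : V × V) : Prop :=
  ∃ u u' v v' : V, u ≠ u' ∧ v ≠ v' ∧ E u v ∧ E u' v' ∧ ¬ E u v' ∧
    ((p = (u, u') ∧ q = (v, v')) ∨ (p = (v', v) ∧ q = (u', u)))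

/-- The edge relation of the implication graph `H*` of a reflexive digraph with edge
relation `E`: for any three distinct vertices `u, v, w`, there are edges
`(u,v) → (w,v)` and `(v,w) → (v,u)` iff `[E u w ∧ ¬ E u v]` or `[E w u ∧ ¬ E v u]`. -/
def implEdge {V : Type*} (E : V → V → Prop) (p q : V × V) : Prop :=
  ∃ u v w : V, u ≠ v ∧ v ≠ w ∧ u ≠ w ∧
    ((E u w ∧ ¬ E u v) ∨ (E w u ∧ ¬ E v u)) ∧
    ((p = (u, v) ∧ q = (w, v)) ∨ (p = (v, w) ∧ q = (v, u)))

/-- A tournament on `V`: for each pair of distinct vertices exactly one of the two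
directed edges is present, and there are no loops. -/
def IsTournamentRel {V : Type*} (T : V → V → Prop) : Prop :=
  (∀ u, ¬ T u u) ∧ ∀ u v : V, u ≠ v → (T u v ↔ ¬ T v u)

/-- A tournament (orientation of the complete graph) `T` is consistent with the digraph `E`
if for every vertex `(u,v)` of the implication graph and every vertex `(u',v')` reachable
from `(u,v)` by a directed walk in the implication graph, `u → v` in `T` implies
`u' → v'` in `T`. -/
def ConsistentWith {V : Type*} (E T : V → V → Prop) : Prop :=
  ∀ u v u' v' : V, u ≠ v → u' ≠ v' →
    Relation.ReflTransGen (implEdge E) (u, v) (u', v') → T u v → T u' v'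

/-- `u, v` form an invertible pair of the digraph `E`: they are distinct and `(u,v)` and
`(v,u)` lie in the same strong component of the pair digraph. -/
def InvertiblePair {V : Type*} (E : V → V → Prop) (u v : V) : Prop :=
  u ≠ v ∧ Relation.ReflTransGen (pairEdge E) (u, v) (v, u) ∧
    Relation.ReflTransGen (pairEdge E) (v, u) (u, v)

/-- The tournament obtained from `T` by reversing the direction of all edges `(x, y)` of `T`
with `u → x`, `x → y`, `y → u` in `T` (the set `E_u`). -/
def revTri {V : Type*} (T : V → V → Prop) (u : V) (x y : V) : Prop :=
  (T x y ∧ ¬ (T u x ∧ T x y ∧ T y u)) ∨ (T y x ∧ T u y ∧ T x u)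

/-!
For a reflexive digraph, an edge of `H*` is an edge of `H⁺` in which one coordinate moves along a
loop. Conversely, an edge `(u, u') → (v, v')` of `H⁺` splits into the walk
`(u, u') → (u, v') → (v, v')` of `H*`, where a step that moves nothing is skipped: that `(u, v')` is
not an edge of `H` permits both steps, and it forces `u ≠ v'`, so that the middle pair is a vertex.
Both graphs are unchanged when all edges of `H` are reversed, which exchanges the two kinds of edges
in the definition of `H⁺`.
-/

section

open Relation

variable {V : Type*} {E : V → V → Prop} {a b c u u' v v' : V} {p q : V × V}

theorem pairEdge_flip_of_pairEdge (h : pairEdge E p q) : pairEdge (flip E) p q := by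
  obtain ⟨u, u', v, v', huu', hvv', huv, hu'v', hnuv', hpq⟩ := h
  exact ⟨v', v, u', u, hvv'.symm, huu'.symm, hu'v', huv, hnuv', hpq.symm⟩

theorem pairEdge_flip : pairEdge (flip E) = pairEdge E := by
  ext p q
  exact ⟨pairEdge_flip_of_pairEdge, pairEdge_flip_of_pairEdge⟩

theorem implEdge_flip : implEdge (flip E) = implEdge E := by
  ext p q
  simp only [implEdge, flip, or_comm]

theorem pairEdge_left (hrefl : ∀ x, E x x) (hcb : c ≠ b) (hac : E a c) (hnab : ¬ E a b) :
    pairEdge E (a, b) (c, b) :=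
  ⟨a, b, c, b, fun h => hnab (h ▸ hrefl a), hcb, hac, hrefl b, hnab, .inl ⟨rfl, rfl⟩⟩

theorem pairEdge_right (hrefl : ∀ x, E x x) (hab : a ≠ b) (hbc : E b c) (hnac : ¬ E a c) :
    pairEdge E (a, b) (a, c) :=
  ⟨a, b, a, c, hab, fun h => hnac (h ▸ hrefl a), hrefl a, hbc, hnac, .inl ⟨rfl, rfl⟩⟩

theorem pairEdge_of_implEdge (hrefl : ∀ x, E x x) (h : implEdge E p q) : pairEdge E p q := by
  obtain ⟨u, v, w, -, hvw, -, ⟨huw, hnuv⟩ | ⟨hwu, hnvu⟩, ⟨rfl, rfl⟩ | ⟨rfl, rfl⟩⟩ := h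
  · exact pairEdge_left hrefl hvw.symm huw hnuv
  · rw [← pairEdge_flip]
    exact pairEdge_right hrefl hvw huw hnuv
  · rw [← pairEdge_flip]
    exact pairEdge_left hrefl hvw.symm hwu hnvu
  · exact pairEdge_right hrefl hvw hwu hnvu

theorem reflTransGen_implEdge_left (hab : a ≠ b) (hcb : c ≠ b) (hac : E a c) (hnab : ¬ E a b) :
    ReflTransGen (implEdge E) (a, b) (c, b) := by
  obtain rfl | hne := eq_or_ne a c
  · exact .refl
  · exact .single ⟨a, b, c, hab, hcb.symm, hne, .inl ⟨hac, hnab⟩, .inl ⟨rfl, rfl⟩⟩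

theorem reflTransGen_implEdge_right (hab : a ≠ b) (hac : a ≠ c) (hbc : E b c) (hnac : ¬ E a c) :
    ReflTransGen (implEdge E) (a, b) (a, c) := by
  obtain rfl | hne := eq_or_ne c b
  · exact .refl
  · exact .single ⟨c, a, b, hac.symm, hab, hne, .inr ⟨hbc, hnac⟩, .inr ⟨rfl, rfl⟩⟩

theorem reflTransGen_implEdge_of_edges (hrefl : ∀ x, E x x) (huu' : u ≠ u') (hvv' : v ≠ v')
    (huv : E u v) (hu'v' : E u' v') (hnuv' : ¬ E u v') :
    ReflTransGen (implEdge E) (u, u') (v, v') := by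
  have hne : u ≠ v' := fun h => hnuv' (h ▸ hrefl u)
  calc
    ReflTransGen (implEdge E) (u, u') (u, v') :=
      reflTransGen_implEdge_right huu' hne hu'v' hnuv'
    ReflTransGen (implEdge E) (u, v') (v, v') :=
      reflTransGen_implEdge_left hne hvv' huv hnuv'

theorem reflTransGen_implEdge_of_pairEdge (hrefl : ∀ x, E x x) (h : pairEdge E p q) :
    ReflTransGen (implEdge E) p q := by
  obtain ⟨u, u', v, v', huu', hvv', huv, hu'v', hnuv', ⟨rfl, rfl⟩ | ⟨rfl, rfl⟩⟩ := h
  · exact reflTransGen_implEdge_of_edges hrefl huu' hvv' huv hu'v' hnuv'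
  · rw [← implEdge_flip]
    exact reflTransGen_implEdge_of_edges hrefl hvv'.symm huu'.symm hu'v' huv hnuv'

theorem stmt_6_general (hrefl : ∀ x, E x x) :
    ReflTransGen (pairEdge E) p q ↔ ReflTransGen (implEdge E) p q :=
  ⟨reflTransGen_closed (fun _ _ => reflTransGen_implEdge_of_pairEdge hrefl) p q,
    ReflTransGen.mono (fun _ _ => pairEdge_of_implEdge hrefl) p q⟩

end

/-- For a reflexive digraph `H` and pair vertices `(u,v)` and `(u',v')`
(with distinct coordinates), `(u',v')` is reachable from `(u,v)` by a directed walk in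
the pair digraph `H⁺` iff it is reachable by a directed walk in the implication graph `H*`. -/
theorem stmt_6 {V : Type*} [Fintype V] (E : V → V → Prop) (hrefl : ∀ v, E v v)
    (u v u' v' : V) (huv : u ≠ v) (huv' : u' ≠ v') :
    Relation.ReflTransGen (pairEdge E) (u, v) (u', v') ↔
      Relation.ReflTransGen (implEdge E) (u, v) (u', v') :=
  stmt_6_general hrefl
end

section
/- Let H be a reflexive digraph and let ≺ be a linear ordering of V(H). Then ≺ is a min ordering of H if and only if the tournament T defined by u → v in T iff u ≺ v is consistent with H. -/
/-! For a reflexive digraph both properties say the same thing about triples `u ≺ v ≺ w`: an edge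
between `u` and `w` forces the edge in the same direction between `u` and `v`. Taking the loop at
`v` as second edge in the min-ordering condition yields this; conversely, an instance of that
condition on `u, v, u', v'` asks for a loop if `u = v'` and otherwise is an instance of the triple
condition on `u ≺ v' ≺ v` or on `v' ≺ u ≺ u'`. On the other side, an arc of `H*` violated by `≺` is
exactly a triple violating the condition. -/

/-- The one-sided umbrella property of a digraph `E` with respect to `r`: an edge joining `u` to a
later `w`, in either direction, forces the edge in that direction joining `u` to each vertex
between them. It is the common reformulation of min orderings and consistent tournaments. -/
def UmbrellaProp {V : Type*} (E r : V → V → Prop) : Prop :=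
  ∀ u v w : V, r u v → r v w → (E u w → E u v) ∧ (E w u → E v u)

section

variable {V : Type*} {E r : V → V → Prop}

theorem MinOrderProp.umbrellaProp (hrefl : ∀ v, E v v) (hmin : MinOrderProp E r) :
    UmbrellaProp E r := fun u v w huv hvw ↦
  ⟨fun huw ↦ hmin u w v v huw (hrefl v) huv hvw, fun hwu ↦ hmin v v w u (hrefl v) hwu hvw huv⟩

theorem UmbrellaProp.minOrderProp [Std.Trichotomous r] (hrefl : ∀ v, E v v)
    (humb : UmbrellaProp E r) : MinOrderProp E r := by
  intro u v u' v' huv hu'v' huu' hv'v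
  rcases trichotomous_of r u v' with huv' | rfl | hv'u
  · exact (humb u v' v huv' hv'v).1 huv
  · exact hrefl u
  · exact (humb v' u u' hv'u huu').2 hu'v'

theorem minOrderProp_iff_umbrellaProp [Std.Trichotomous r] (hrefl : ∀ v, E v v) :
    MinOrderProp E r ↔ UmbrellaProp E r :=
  ⟨MinOrderProp.umbrellaProp hrefl, UmbrellaProp.minOrderProp hrefl⟩

theorem UmbrellaProp.rel_of_implEdge [Std.Trichotomous r] (humb : UmbrellaProp E r)
    {p q : V × V} (hpq : implEdge E p q) (hp : r p.1 p.2) : r q.1 q.2 := by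
  obtain ⟨u, v, w, huv, hvw, -, hE, hpq⟩ := hpq
  have not_increasing : ¬(r u v ∧ r v w) := fun ⟨hruv, hrvw⟩ ↦ by
    have := humb u v w hruv hrvw
    tauto
  rcases hpq with ⟨rfl, rfl⟩ | ⟨rfl, rfl⟩
  · by_contra hwv
    exact hvw (Std.Trichotomous.trichotomous v w (fun h ↦ not_increasing ⟨hp, h⟩) hwv)
  · by_contra hvu
    exact huv (Std.Trichotomous.trichotomous u v (fun h ↦ not_increasing ⟨h, hp⟩) hvu)

theorem UmbrellaProp.consistentWith [Std.Trichotomous r] (humb : UmbrellaProp E r) :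
    ConsistentWith E r := by
  intro u v u' v' _ _ hwalk huv
  have rel_of_walk {q : V × V} (hq : Relation.ReflTransGen (implEdge E) (u, v) q) :
      r q.1 q.2 := by
    induction hq with
    | refl => exact huv
    | tail _ hstep ih => exact humb.rel_of_implEdge hstep ih
  exact rel_of_walk hwalk

theorem ConsistentWith.umbrellaProp [Std.Asymm r] (hcons : ConsistentWith E r) :
    UmbrellaProp E r := by
  intro u v w huv hvw
  have huv_ne : u ≠ v := ne_of_irrefl huv
  have hvw_ne : v ≠ w := ne_of_irrefl hvw
  have huw_ne : u ≠ w := by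
    rintro rfl
    exact asymm huv hvw
  have not_forced : ¬((E u w ∧ ¬E u v) ∨ (E w u ∧ ¬E v u)) := fun hE ↦
    have harc : implEdge E (u, v) (w, v) :=
      ⟨u, v, w, huv_ne, hvw_ne, huw_ne, hE, .inl ⟨rfl, rfl⟩⟩
    asymm hvw (hcons u v w v huv_ne hvw_ne.symm (.single harc) huv)
  tauto

theorem consistentWith_iff_umbrellaProp [Std.Asymm r] [Std.Trichotomous r] :
    ConsistentWith E r ↔ UmbrellaProp E r :=
  ⟨ConsistentWith.umbrellaProp, UmbrellaProp.consistentWith⟩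

theorem stmt_8_general [Std.Asymm r] [Std.Trichotomous r] (hrefl : ∀ v, E v v) :
    MinOrderProp E r ↔ ConsistentWith E r :=
  (minOrderProp_iff_umbrellaProp hrefl).trans consistentWith_iff_umbrellaProp.symm

end

/-- For a reflexive digraph `H` and a linear ordering `≺` of `V(H)`,
`≺` is a min ordering of `H` iff the tournament `T` with `u → v` iff `u ≺ v`
is consistent with `H`. -/
theorem stmt_8 {V : Type*} [Fintype V] (E : V → V → Prop) (hrefl : ∀ v, E v v)
    (r : V → V → Prop) (hord : IsStrictTotalOrder V r) :
    MinOrderProp E r ↔ ConsistentWith E r :=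
  stmt_8_general hrefl
end

section
/- Let H be a reflexive digraph, let T be a tournament on V(H) consistent with H, and let u be a vertex of H. Let E_u be the set of edges (v,w) of T such that u → v, v → w, and w → u in T, and let T' be the tournament obtained from T by reversing the direction of all edges in E_u. Then T' is consistent with H. -/
/-!
The edges of `H*` say when `T a b` forces `T c b`. Two facts drive the proof. If `a → b → c` in a
consistent tournament, then `T a b` does not force `T c b`. Applying this to the paths of a cyclic
triangle shows that `H` has either all six edges between its vertices or none of them, so no
forcing takes place inside such a triangle. Now suppose that `T' a b` forces `T' c b` but the latter
fails. Then `a → u → c` in `T`, so `T a u` does not force `T c u`, and this makes the forcing of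
`T c b` by `T a b` a forcing of `T u b` by `T a b`. But there is none, as either `a → b → u` or
`a → u → b → a` in `T`.
-/

section

variable {V : Type*} {E T : V → V → Prop} {a b c u x y z : V}

namespace IsTournamentRel

theorem asymm (hT : IsTournamentRel T) (h : T x y) : ¬ T y x := by
  rcases eq_or_ne x y with rfl | hxy
  · exact hT.1 x
  · exact (hT.2 x y hxy).1 h

theorem ne (hT : IsTournamentRel T) (h : T x y) : x ≠ y := by
  rintro rfl
  exact hT.1 x h

theorem of_not (hT : IsTournamentRel T) (hxy : x ≠ y) (h : ¬ T x y) : T y x :=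
  (hT.2 y x hxy.symm).2 h

end IsTournamentRel

theorem isTournamentRel_revTri (hT : IsTournamentRel T) (u : V) : IsTournamentRel (revTri T u) := by
  refine ⟨fun x => ?_, fun x y hxy => ?_⟩
  · simp [revTri, hT.1 x]
  · have hiff := hT.2 x y hxy
    simp only [revTri]
    tauto

/-- The condition on `E` under which the implication graph has, for distinct `a`, `b`, `c`, the
edges `(a, b) → (c, b)` and `(b, c) → (b, a)`. Distinctness is left out of the definition, since
`b ≠ c` follows from it and the other two cases are harmless for tournaments. -/
def Forces (E : V → V → Prop) (a b c : V) : Prop :=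
  (E a c ∧ ¬ E a b) ∨ (E c a ∧ ¬ E b a)

theorem Forces.ne (h : Forces E a b c) : b ≠ c := by
  rintro rfl
  simp [Forces] at h

theorem Forces.of_not_forces (h : Forces E a b c) (hu : ¬ Forces E a u c) : Forces E a b u := by
  unfold Forces at *
  tauto

theorem consistentWith_of_implEdge
    (hstep : ∀ p q, implEdge E p q → T p.1 p.2 → T q.1 q.2) : ConsistentWith E T := by
  intro u v u' v' _ _ hwalk huv
  exact hwalk.head_induction_on
    (motive := fun p _ => T p.1 p.2 → T u' v') id (fun h _ ih hp => ih (hstep _ _ h hp)) huv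

namespace IsTournamentRel

theorem consistentWith_iff (hT : IsTournamentRel T) :
    ConsistentWith E T ↔ ∀ a b c, Forces E a b c → T a b → T c b := by
  constructor
  · intro hcons a b c hf hab
    rcases eq_or_ne a c with rfl | hac
    · exact hab
    · exact hcons a b c b (hT.ne hab) hf.ne.symm
        (.single ⟨a, b, c, hT.ne hab, hf.ne, hac, hf, .inl ⟨rfl, rfl⟩⟩) hab
  · intro hforce
    refine consistentWith_of_implEdge ?_
    rintro _ _ ⟨a, b, c, hab, -, -, hf, ⟨rfl, rfl⟩ | ⟨rfl, rfl⟩⟩ h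
    · exact hforce a b c hf h
    · exact hT.of_not hab fun hab' => hT.asymm h (hforce a b c hf hab')

theorem not_forces_of_path (hT : IsTournamentRel T) (hcons : ConsistentWith E T)
    (hxy : T x y) (hyz : T y z) : ¬ Forces E x y z :=
  fun hf => hT.asymm hyz (hT.consistentWith_iff.1 hcons x y z hf hxy)

theorem tfae_edge_of_cycle (hT : IsTournamentRel T) (hcons : ConsistentWith E T)
    (hxy : T x y) (hyz : T y z) (hzx : T z x) :
    [E x y, E z y, E z x, E y x, E y z, E x z].TFAE := by
  have hx := hT.not_forces_of_path hcons hxy hyz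
  have hy := hT.not_forces_of_path hcons hyz hzx
  have hz := hT.not_forces_of_path hcons hzx hxy
  simp only [Forces, not_or, not_and_not_right] at hx hy hz
  tfae_have 1 → 2 := hy.2
  tfae_have 2 → 3 := hz.1
  tfae_have 3 → 4 := hx.2
  tfae_have 4 → 5 := hy.1
  tfae_have 5 → 6 := hz.2
  tfae_have 6 → 1 := hx.1
  tfae_finish

theorem not_forces_of_cycle (hT : IsTournamentRel T) (hcons : ConsistentWith E T)
    (hxy : T x y) (hyz : T y z) (hzx : T z x) : ¬ Forces E x z y := by
  have htfae := hT.tfae_edge_of_cycle hcons hxy hyz hzx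
  have hout : E x y ↔ E x z := htfae.out 0 5
  have hin : E y x ↔ E z x := htfae.out 3 2
  simp [Forces, hout, hin]

theorem revTri_of_forces_of_kept (hT : IsTournamentRel T) (hcons : ConsistentWith E T)
    (hf : Forces E a b c) (hab : T a b) (hkept : ¬ (T u a ∧ T a b ∧ T b u)) :
    revTri T u c b := by
  have hcb : T c b := hT.consistentWith_iff.1 hcons a b c hf hab
  refine .inl ⟨hcb, fun ⟨huc, _, hbu⟩ => ?_⟩
  have hau : T a u := by
    refine hT.of_not ?_ fun hua => hkept ⟨hua, hab, hbu⟩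
    rintro rfl
    exact hT.asymm hab hbu
  have hfu : Forces E a b u := hf.of_not_forces (hT.not_forces_of_path hcons hau huc)
  exact hT.not_forces_of_path hcons hab hbu hfu

theorem revTri_of_forces_of_reversed (hT : IsTournamentRel T) (hcons : ConsistentWith E T)
    (hf : Forces E a b c) (hub : T u b) (hba : T b a) (hau : T a u) :
    revTri T u c b := by
  have huc : ¬ T u c := fun huc =>
    hT.not_forces_of_cycle hcons hau hub hba
      (hf.of_not_forces (hT.not_forces_of_path hcons hau huc))
  by_cases hcb : T c b
  · exact .inl ⟨hcb, fun h => huc h.1⟩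
  · have hcu : T c u := by
      refine hT.of_not ?_ huc
      rintro rfl
      exact hcb hub
    exact .inr ⟨hT.of_not hf.ne.symm hcb, hub, hcu⟩

end IsTournamentRel

theorem stmt_11_general (hT : IsTournamentRel T) (hcons : ConsistentWith E T) (u : V) :
    ConsistentWith E (revTri T u) := by
  refine (isTournamentRel_revTri hT u).consistentWith_iff.2 fun a b c hf hab => ?_
  rcases hab with ⟨hab, hkept⟩ | ⟨hba, hub, hau⟩
  · exact hT.revTri_of_forces_of_kept hcons hf hab hkept
  · exact hT.revTri_of_forces_of_reversed hcons hf hub hba hau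

end

/-- Let `T` be a tournament consistent with a reflexive digraph `H`, let `u`
be a vertex, and let `T'` be obtained from `T` by reversing all edges `(v,w)` of `T` with
`u → v`, `v → w`, `w → u` in `T`.  Then `T'` is consistent with `H`. -/
theorem stmt_11 {V : Type*} [Fintype V] (E : V → V → Prop) (hrefl : ∀ v, E v v)
    (T : V → V → Prop) (hT : IsTournamentRel T) (hcons : ConsistentWith E T) (u : V) :
    ConsistentWith E (revTri T u) :=
  stmt_11_general hT hcons u
end

section
/- A reflexive digraph H has a min ordering if and only if it contains no invertible pairs. -/
/-!
A tournament satisfies the min-ordering condition exactly when it is closed under the edges of the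
pair digraph `H⁺`, so a min ordering admits no invertible pair. Conversely, swapping coordinates
reverses `H⁺`, as negating literals reverses the implication graph of a 2-SAT instance. Hence if
no `(u, v)` shares a strong component with `(v, u)`, a maximal closed set of pairs containing no
pair together with its swap is a tournament satisfying the min-ordering condition.

To make the tournament transitive, reverse at a vertex `z` the edges opposite `z` in the cyclic
triangles through `z` (`revTri`). For reflexive `H` this preserves the min-ordering condition,
because on a cyclic triangle all six possible edges of `H` are present or absent together. It
destroys the cyclic triangles through `z` and creates none through a vertex that had none. So
every finite set of vertices can be freed of cyclic triangles, and compactness yields a tournament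
without any, that is, a linear order.
-/

section Tournaments

variable {V : Type*} {T : V → V → Prop}

/-- The vertex `z` lies on no cyclic triangle `z → x → y → z` of the relation `T`. A tournament
with this property at every vertex is transitive. -/
def TriangleFreeAt (T : V → V → Prop) (z : V) : Prop :=
  ∀ x y : V, T z x → T x y → ¬ T y z

theorem isTournamentRel_iff_asymm_and_trichotomous :
    IsTournamentRel T ↔ (∀ u v, T u v → ¬ T v u) ∧ ∀ u v, T u v ∨ u = v ∨ T v u := by
  constructor
  · refine fun ⟨irrefl, iff_not⟩ ↦ ⟨fun u v huv ↦ ?_, fun u v ↦ ?_⟩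
    · have hne : u ≠ v := by
        rintro rfl
        exact irrefl u huv
      exact (iff_not u v hne).1 huv
    · have := iff_not u v
      tauto
  · exact fun ⟨asymm, trichotomous⟩ ↦ ⟨fun u huu ↦ asymm u u huu huu, fun u v hne ↦
      ⟨asymm u v, fun hvu ↦ (trichotomous u v).resolve_right (not_or.2 ⟨hne, hvu⟩)⟩⟩

theorem IsTournamentRel.asymm_s15 (hT : IsTournamentRel T) {u v : V} : T u v → ¬ T v u :=
  (isTournamentRel_iff_asymm_and_trichotomous.1 hT).1 u v

theorem IsTournamentRel.trichotomous (hT : IsTournamentRel T) (u v : V) :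
    T u v ∨ u = v ∨ T v u :=
  (isTournamentRel_iff_asymm_and_trichotomous.1 hT).2 u v

theorem isTournamentRel_of_isStrictTotalOrder [IsStrictTotalOrder V T] : IsTournamentRel T :=
  isTournamentRel_iff_asymm_and_trichotomous.2 ⟨fun _ _ ↦ asymm_of T, trichotomous_of T⟩

theorem IsTournamentRel.isStrictTotalOrder (hT : IsTournamentRel T)
    (hfree : ∀ z, TriangleFreeAt T z) : IsStrictTotalOrder V T where
  irrefl := hT.1
  trichotomous u v huv hvu := ((hT.trichotomous u v).resolve_left huv).resolve_right hvu
  trans u v w huv hvw := by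
    rcases hT.trichotomous u w with huw | rfl | hwu
    · exact huw
    · exact absurd hvw (hT.asymm_s15 huv)
    · exact absurd hwu (hfree u v w huv hvw)

protected theorem IsTournamentRel.revTri (hT : IsTournamentRel T) (z : V) :
    IsTournamentRel (revTri T z) := by
  refine isTournamentRel_iff_asymm_and_trichotomous.2 ⟨fun u v ↦ ?_, fun u v ↦ ?_⟩
  · rintro (⟨huv, hkept⟩ | ⟨hvu, hzv, huz⟩) (⟨hvu', hkept'⟩ | ⟨-, hzu, hvz⟩)
    · exact hT.asymm_s15 huv hvu'
    · exact hkept ⟨hzu, huv, hvz⟩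
    · exact hkept' ⟨hzv, hvu, huz⟩
    · exact hT.asymm_s15 hzu huz
  · unfold revTri
    have := hT.trichotomous u v
    tauto

theorem IsTournamentRel.triangleFreeAt_revTri_self (hT : IsTournamentRel T) (z : V) :
    TriangleFreeAt (revTri T z) z := by
  have irrefl := hT.1 z
  rintro x y (⟨hzx, -⟩ | ⟨-, -, hzz⟩) hxy (⟨hyz, -⟩ | ⟨-, hzz, -⟩)
  · rcases hxy with ⟨hxy, hkept⟩ | ⟨-, -, hxz⟩
    · exact hkept ⟨hzx, hxy, hyz⟩
    · exact hT.asymm_s15 hzx hxz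
  all_goals exact irrefl hzz

protected theorem TriangleFreeAt.revTri {w : V} (hw : TriangleFreeAt T w) (hT : IsTournamentRel T)
    (z : V) : TriangleFreeAt (revTri T z) w := by
  have edge_from {x : V} : revTri T z w x → T w x := by
    rintro (⟨hwx, -⟩ | ⟨hxw, hzx, hwz⟩)
    · exact hwx
    · exact absurd hxw (hw z x hwz hzx)
  have edge_to {x : V} : revTri T z x w → T x w := by
    rintro (⟨hxw, -⟩ | ⟨hwx, hzw, hxz⟩)
    · exact hxw
    · exact absurd hzw (hw x z hwx hxz)
  rintro x y hwx (⟨hxy, -⟩ | ⟨-, hzy, hxz⟩) hyw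
  · exact hw x y (edge_from hwx) hxy (edge_to hyw)
  · rcases hT.trichotomous w z with hwz | rfl | hzw
    · exact hw z y hwz hzy (edge_to hyw)
    · exact hT.asymm_s15 hxz (edge_from hwx)
    · exact hw x z (edge_from hwx) hxz hzw

end Tournaments

section MinOrder

variable {V : Type*} {E T : V → V → Prop}

protected theorem MinOrderProp.flip (hmin : MinOrderProp E T) : MinOrderProp (flip E) T :=
  fun u v u' v' huv huv' hu hv ↦ hmin v' u' v u huv' huv hv hu

theorem MinOrderProp.edge_of_path (hmin : MinOrderProp E T) (hrefl : ∀ v, E v v) {u v w : V}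
    (huv : T u v) (hvw : T v w) (hE : E u w) : E u v :=
  hmin u w v v hE (hrefl v) huv hvw

theorem IsTournamentRel.minOrderProp_iff_path (hT : IsTournamentRel T) (hrefl : ∀ v, E v v) :
    MinOrderProp E T ↔ ∀ u v w, T u v → T v w → (E u w → E u v) ∧ (E w u → E v u) := by
  refine ⟨fun hmin u v w huv hvw ↦
    ⟨hmin.edge_of_path hrefl huv hvw, hmin.flip.edge_of_path hrefl huv hvw⟩, ?_⟩
  intro hpath u v u' v' huv huv' huu' hvv'
  rcases hT.trichotomous u v' with h | rfl | h
  · exact (hpath u v' v h hvv').1 huv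
  · exact hrefl u
  · exact (hpath v' u u' h huu').2 huv'

theorem MinOrderProp.edge_of_cyclic_triangle (hmin : MinOrderProp E T) (hrefl : ∀ v, E v v)
    {u v w : V} (huv : T u v) (hvw : T v w) (hwu : T w u) (hE : E u v) : E u w := by
  have hwv : E w v := hmin.flip.edge_of_path hrefl hvw hwu hE
  have hwu' : E w u := hmin.edge_of_path hrefl hwu huv hwv
  have hvu : E v u := hmin.flip.edge_of_path hrefl huv hvw hwu'
  have hvw' : E v w := hmin.edge_of_path hrefl hvw hwu hvu
  exact hmin.flip.edge_of_path hrefl hwu huv hvw'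

theorem MinOrderProp.edge_of_revTri_path (hmin : MinOrderProp E T) (hT : IsTournamentRel T)
    (hrefl : ∀ v, E v v) {z u v w : V} (huv : revTri T z u v) (hvw : revTri T z v w)
    (hE : E u w) : E u v := by
  rcases huv with ⟨huv, huv_kept⟩ | ⟨hvu, hzv, huz⟩ <;>
    rcases hvw with ⟨hvw, hvw_kept⟩ | ⟨-, hzw, hvz⟩
  · exact hmin.edge_of_path hrefl huv hvw hE
  · have huz : T u z := by
      rcases hT.trichotomous u z with huz | rfl | hzu
      · exact huz
      · exact absurd hvz (hT.asymm_s15 huv)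
      · exact absurd ⟨hzu, huv, hvz⟩ huv_kept
    exact hmin.edge_of_path hrefl huv hvz (hmin.edge_of_path hrefl huz hzw hE)
  · have hzw : T z w := by
      rcases hT.trichotomous z w with hzw | rfl | hwz
      · exact hzw
      · exact absurd hvw (hT.asymm_s15 hzv)
      · exact absurd ⟨hzv, hvw, hwz⟩ hvw_kept
    exact hmin.edge_of_cyclic_triangle hrefl huz hzv hvu (hmin.edge_of_path hrefl huz hzw hE)
  · exact absurd hvz (hT.asymm_s15 hzv)

protected theorem MinOrderProp.revTri (hmin : MinOrderProp E T) (hT : IsTournamentRel T)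
    (hrefl : ∀ v, E v v) (z : V) : MinOrderProp E (revTri T z) :=
  ((hT.revTri z).minOrderProp_iff_path hrefl).2 fun _ _ _ huv hvw ↦
    ⟨hmin.edge_of_revTri_path hT hrefl huv hvw, hmin.flip.edge_of_revTri_path hT hrefl huv hvw⟩

theorem MinOrderProp.exists_triangleFreeAt_finset (hmin : MinOrderProp E T) (hT : IsTournamentRel T)
    (hrefl : ∀ v, E v v) (s : Finset V) :
    ∃ R : V → V → Prop, IsTournamentRel R ∧ MinOrderProp E R ∧ ∀ z ∈ s, TriangleFreeAt R z := by
  classical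
  induction s using Finset.induction_on with
  | empty => exact ⟨T, hT, hmin, by simp⟩
  | insert z s _ ih =>
    obtain ⟨R, hR, hmin, hfree⟩ := ih
    exact ⟨revTri R z, hR.revTri z, hmin.revTri hR hrefl z, Finset.forall_mem_insert .. |>.2
      ⟨hR.triangleFreeAt_revTri_self z, fun w hw ↦ (hfree w hw).revTri hR z⟩⟩

end MinOrder

section Compactness

variable {V : Type*}

theorem exists_rel_agreeing_on_finsets (R : Finset V → V → V → Prop) :
    ∃ L : V → V → Prop, ∀ s : Finset V, ∃ t, s ⊆ t ∧ ∀ x ∈ s, ∀ y ∈ s, L x y ↔ R t x y := by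
  classical
  obtain ⟨χ, hχ⟩ := Finset.rado_selection (β := fun _ : V × V ↦ Prop)
    fun p xy ↦ R (p.image Prod.fst) xy.1 xy.2
  refine ⟨fun x y ↦ χ (x, y), fun s ↦ ?_⟩
  obtain ⟨p, hsp, hagree⟩ := hχ (s ×ˢ s)
  refine ⟨p.image Prod.fst, fun x hx ↦ ?_, fun x hx y hy ↦ ?_⟩
  · exact Finset.mem_image_of_mem Prod.fst (hsp (Finset.mk_mem_product hx hx))
  · exact iff_of_eq (hagree (x, y) (Finset.mk_mem_product hx hy))

theorem exists_triangleFreeAt_minOrderProp_of_finsets {E : V → V → Prop}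
    (hfin : ∀ s : Finset V, ∃ R : V → V → Prop,
      IsTournamentRel R ∧ MinOrderProp E R ∧ ∀ z ∈ s, TriangleFreeAt R z) :
    ∃ L : V → V → Prop, IsTournamentRel L ∧ MinOrderProp E L ∧ ∀ z, TriangleFreeAt L z := by
  classical
  choose R hR hmin hfree using hfin
  obtain ⟨L, hL⟩ := exists_rel_agreeing_on_finsets R
  refine ⟨L, ⟨fun u ↦ ?_, fun u v hne ↦ ?_⟩, fun u v u' v' huv huv' ↦ ?_, fun z x y ↦ ?_⟩
  · obtain ⟨t, -, hLR⟩ := hL {u}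
    simpa [hLR] using (hR t).1 u
  · obtain ⟨t, -, hLR⟩ := hL {u, v}
    simpa [hLR] using (hR t).2 u v hne
  · obtain ⟨t, -, hLR⟩ := hL {u, v, u', v'}
    simpa [hLR] using hmin t u v u' v' huv huv'
  · obtain ⟨t, hst, hLR⟩ := hL {z, x, y}
    simpa [hLR] using hfree t z (hst (by simp)) x y

end Compactness

section SkewSymmetricRelations

open Relation

variable {α : Type*} {R : α → α → Prop} {σ : α → α}

theorem mem_of_reflTransGen {S : Set α} (hS : ∀ p q, R p q → p ∈ S → q ∈ S) {p q : α}
    (hpq : ReflTransGen R p q) (hp : p ∈ S) : q ∈ S := by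
  induction hpq with
  | refl => exact hp
  | tail _ hstep ih => exact hS _ _ hstep ih

theorem reflTransGen_apply_of_reversing (hR : ∀ p q, R p q → R (σ q) (σ p)) {p q : α}
    (hpq : ReflTransGen R p q) : ReflTransGen R (σ q) (σ p) := by
  induction hpq with
  | refl => exact .refl
  | tail _ hstep ih => exact .head (hR _ _ hstep) ih

/-- A set of literals closed under the implications `R` and containing no literal `p` together
with its negation `σ p`: a consistent partial assignment of a 2-SAT instance. -/
structure IsConsistentClosed (R : α → α → Prop) (σ : α → α) (S : Set α) : Prop where
  closed : ∀ p q, R p q → p ∈ S → q ∈ S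
  apply_notMem : ∀ p ∈ S, σ p ∉ S

theorem exists_maximal_isConsistentClosed (R : α → α → Prop) (σ : α → α) :
    ∃ S, Maximal (IsConsistentClosed R σ) S := by
  refine zorn_subset {S | IsConsistentClosed R σ S} fun c hc hchain ↦
    ⟨⋃₀ c, ⟨?_, ?_⟩, fun S hS ↦ Set.subset_sUnion_of_mem hS⟩
  · rintro p q hpq ⟨S, hS, hp⟩
    exact ⟨S, hS, (hc hS).closed p q hpq hp⟩
  · rintro p ⟨S, hS, hp⟩ ⟨S', hS', hp'⟩
    obtain ⟨S'', hS'', hSS'', hS'S''⟩ := hchain.directedOn S hS S' hS'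
    exact (hc hS'').apply_notMem p (hSS'' hp) (hS'S'' hp')

theorem IsConsistentClosed.union_reachable (hσ : σ.Involutive)
    (hR : ∀ p q, R p q → R (σ q) (σ p)) {S : Set α} (hS : IsConsistentClosed R σ S) {p : α}
    (hp : σ p ∉ S) (hpσ : ¬ ReflTransGen R p (σ p)) :
    IsConsistentClosed R σ (S ∪ {q | ReflTransGen R p q}) := by
  have reach_apply {q : α} (hq : ReflTransGen R p (σ q)) : ReflTransGen R q (σ p) := by
    simpa only [hσ q] using reflTransGen_apply_of_reversing hR hq
  refine ⟨?_, ?_⟩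
  · rintro q q' hqq' (hq | hq)
    · exact .inl (hS.closed q q' hqq' hq)
    · exact .inr (hq.tail hqq')
  · rintro q (hq | hq) (hσq | hσq)
    · exact hS.apply_notMem q hq hσq
    · exact hp (mem_of_reflTransGen hS.closed (reach_apply hσq) hq)
    · exact hp (mem_of_reflTransGen hS.closed (reflTransGen_apply_of_reversing hR hq) hσq)
    · exact hpσ (hq.trans (reach_apply hσq))

theorem IsConsistentClosed.mem_or_apply_mem_of_maximal (hσ : σ.Involutive)
    (hR : ∀ p q, R p q → R (σ q) (σ p)) {S : Set α} (hS : Maximal (IsConsistentClosed R σ) S)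
    {p : α} (hp : ¬ (ReflTransGen R p (σ p) ∧ ReflTransGen R (σ p) p)) : p ∈ S ∨ σ p ∈ S := by
  have mem_of_not_reach {q : α} (hq : σ q ∉ S) (hqσ : ¬ ReflTransGen R q (σ q)) : q ∈ S :=
    hS.2 (hS.1.union_reachable hσ hR hq hqσ) Set.subset_union_left (.inr .refl)
  by_contra! hmem
  rcases not_and_or.1 hp with hreach | hreach
  · exact hmem.1 (mem_of_not_reach hmem.2 hreach)
  · exact hmem.2 (mem_of_not_reach ((hσ p).symm ▸ hmem.1) ((hσ p).symm ▸ hreach))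

end SkewSymmetricRelations

section PairDigraph

variable {V : Type*} {E T : V → V → Prop}

theorem pairEdge.swap {p q : V × V} : pairEdge E p q → pairEdge E q.swap p.swap := by
  rintro ⟨u, u', v, v', hu, hv, huv, huv', hE, ⟨rfl, rfl⟩ | ⟨rfl, rfl⟩⟩
  · exact ⟨u, u', v, v', hu, hv, huv, huv', hE, .inr ⟨rfl, rfl⟩⟩
  · exact ⟨u, u', v, v', hu, hv, huv, huv', hE, .inl ⟨rfl, rfl⟩⟩

theorem IsTournamentRel.minOrderProp_iff_pairEdge_closed (hT : IsTournamentRel T) :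
    MinOrderProp E T ↔ ∀ p q, pairEdge E p q → T p.1 p.2 → T q.1 q.2 := by
  constructor
  · rintro hmin p q ⟨u, u', v, v', hu, hv, huv, huv', hE, ⟨rfl, rfl⟩ | ⟨rfl, rfl⟩⟩ hp
    · exact (hT.2 v v' hv).2 fun hv'v ↦ hE (hmin u v u' v' huv huv' hp hv'v)
    · exact (hT.2 u' u hu.symm).2 fun huu' ↦ hE (hmin u v u' v' huv huv' huu' hp)
  · intro hclosed u v u' v' huv huv' huu' hv'v
    by_contra hE
    have hu : u ≠ u' := fun h ↦ hT.1 u (h ▸ huu')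
    have hv : v ≠ v' := fun h ↦ hT.1 v (h ▸ hv'v)
    have hedge : pairEdge E (u, u') (v, v') :=
      ⟨u, u', v, v', hu, hv, huv, huv', hE, .inl ⟨rfl, rfl⟩⟩
    exact hT.asymm_s15 hv'v (hclosed _ _ hedge huu')

theorem MinOrderProp.not_invertiblePair (hT : IsTournamentRel T) (hmin : MinOrderProp E T)
    (u v : V) : ¬ InvertiblePair E u v := by
  rintro ⟨hne, huv, hvu⟩
  have hclosed := hT.minOrderProp_iff_pairEdge_closed.1 hmin
  have transport {p q : V × V} (hpq : Relation.ReflTransGen (pairEdge E) p q) :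
      T p.1 p.2 → T q.1 q.2 :=
    mem_of_reflTransGen (S := {p : V × V | T p.1 p.2}) hclosed hpq
  rcases hT.trichotomous u v with h | h | h
  · exact hT.asymm_s15 h (transport huv h)
  · exact hne h
  · exact hT.asymm_s15 h (transport hvu h)

theorem exists_isTournamentRel_minOrderProp (hinv : ¬ ∃ u v, InvertiblePair E u v) :
    ∃ T : V → V → Prop, IsTournamentRel T ∧ MinOrderProp E T := by
  obtain ⟨S, hS⟩ := exists_maximal_isConsistentClosed (pairEdge E) Prod.swap
  have hT : IsTournamentRel fun u v ↦ (u, v) ∈ S := by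
    refine isTournamentRel_iff_asymm_and_trichotomous.2
      ⟨fun u v ↦ hS.1.apply_notMem (u, v), fun u v ↦ ?_⟩
    by_cases hne : u = v
    · exact .inr (.inl hne)
    · exact (IsConsistentClosed.mem_or_apply_mem_of_maximal Prod.swap_swap (fun _ _ ↦ pairEdge.swap)
        hS fun hreach ↦ hinv ⟨u, v, hne, hreach⟩).imp_right .inr
  exact ⟨_, hT, hT.minOrderProp_iff_pairEdge_closed.2 hS.1.closed⟩

end PairDigraph

theorem stmt_15_general {V : Type*} (E : V → V → Prop) (hrefl : ∀ v, E v v) :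
    (∃ r : V → V → Prop, IsStrictTotalOrder V r ∧ MinOrderProp E r) ↔
      ¬ ∃ u v : V, InvertiblePair E u v := by
  constructor
  · rintro ⟨r, hr, hmin⟩ ⟨u, v, huv⟩
    exact hmin.not_invertiblePair isTournamentRel_of_isStrictTotalOrder u v huv
  · intro hinv
    obtain ⟨T, hT, hTmin⟩ := exists_isTournamentRel_minOrderProp hinv
    obtain ⟨r, hr, hmin, hfree⟩ := exists_triangleFreeAt_minOrderProp_of_finsets
      (hTmin.exists_triangleFreeAt_finset hT hrefl)
    exact ⟨r, hr.isStrictTotalOrder hfree, hmin⟩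

/-- A reflexive digraph `H` has a min ordering iff it contains no
invertible pairs. -/
theorem stmt_15 {V : Type*} [Fintype V] (E : V → V → Prop) (hrefl : ∀ v, E v v) :
    (∃ r : V → V → Prop, IsStrictTotalOrder V r ∧ MinOrderProp E r) ↔
      ¬ ∃ u v : V, InvertiblePair E u v :=
  stmt_15_general E hrefl
end
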